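/- (No More Crossing) In the robot model on a line, assume the visibility graph at time 0 is connected. Then every non-faulty robot i crosses each faulty robot only finitely many times: the set of times { t : (x t i < 0) ≠ (x (t+1) i < 0) } is finite, and the set of times { t : (x t i > D) ≠ (x (t+1) i > D) } is finite. -/

import Mathlib

open Filter Topology

/-- Position of the farthest left robot visible from robot `i` at time `t`
(visibility radius `V`). -/
noncomputable def lpos {n : ℕ} (V : ℝ) (x : ℕ → Fin (n + 1) → ℝ)
    (t : ℕ) (i : Fin (n + 1)) : ℝ :=
  sInf (x t '' {j | |x t j - x t i| ≤ V})

/-- Position of the farthest right robot visible from robot `i` at time `t`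
(visibility radius `V`). -/
noncomputable def rpos {n : ℕ} (V : ℝ) (x : ℕ → Fin (n + 1) → ℝ)
    (t : ℕ) (i : Fin (n + 1)) : ℝ :=
  sSup (x t '' {j | |x t j - x t i| ≤ V})

/-!
Look only at the robots in the group of a non-faulty robot `i`, those joined to it by a chain of
robots that see each other at some time, and let `p` be a level with no faulty robot to its left. If
at some time the group lies in `[p, ∞)`, it stays there. Otherwise the leftmost non-faulty robot `m`
of the group is always the leftmost of the whole group and left of `p`, so it moves right
monotonically and converges to some `c ≤ p`.

The robots converging to `c` form a cluster. If a non-faulty cluster robot sees `j`, then it sees it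
forever, and it moves at least to the midpoint of `m` and `j`; both it and `m` converge to `c`, so
`j` lies in the cluster as well.

If `i` is in the cluster, then from some time on both `i` and `m` see exactly the cluster, so `i`
moves to the same place as `m`, left of `p`. If `i` is not in the cluster, the cluster must contain
a faulty robot, since otherwise it would absorb the whole group; hence `c = p`, and `i`, which `m`
never sees, eventually stays to the right of `p`. The other end is the mirror image.
-/

section Configuration

variable {ι : Type*} {V a : ℝ} {y : ι → ℝ} {i j k : ι}

/-- The robots that robot `i` sees in the configuration `y`. -/
def visibleRobots (V : ℝ) (y : ι → ℝ) (i : ι) : Set ι := {j | |y j - y i| ≤ V}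

/-- The leftmost position `l` that robot `i` sees in the configuration `y`. This is `lpos` for an
arbitrary index type. -/
noncomputable def leftmostVisible (V : ℝ) (y : ι → ℝ) (i : ι) : ℝ :=
  sInf (y '' visibleRobots V y i)

/-- The rightmost position `r` that robot `i` sees in the configuration `y`. This is `rpos` for an
arbitrary index type. -/
noncomputable def rightmostVisible (V : ℝ) (y : ι → ℝ) (i : ι) : ℝ :=
  sSup (y '' visibleRobots V y i)

/-- The position to which the update rule sends a non-faulty robot `i`. -/
noncomputable def moveTarget (V : ℝ) (y : ι → ℝ) (i : ι) : ℝ :=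
  (leftmostVisible V y i + rightmostVisible V y i) / 2

lemma mem_visibleRobots : j ∈ visibleRobots V y i ↔ |y j - y i| ≤ V := Iff.rfl

lemma mem_visibleRobots_iff_le_and_le :
    j ∈ visibleRobots V y i ↔ y i - V ≤ y j ∧ y j ≤ y i + V := by
  rw [mem_visibleRobots, abs_sub_comm, abs_sub_le_iff, sub_le_comm,
    sub_le_iff_le_add' (a := y j)]

lemma mem_visibleRobots_comm : j ∈ visibleRobots V y i ↔ i ∈ visibleRobots V y j := by
  rw [mem_visibleRobots, mem_visibleRobots, abs_sub_comm]

lemma self_mem_visibleRobots (hV : 0 ≤ V) : i ∈ visibleRobots V y i := by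
  simpa [mem_visibleRobots] using hV

lemma visibleRobots_neg : visibleRobots V (-y) i = visibleRobots V y i := by
  ext j
  simp [mem_visibleRobots, abs_sub_comm, neg_add_eq_sub]

lemma leftmostVisible_neg : leftmostVisible V (-y) i = -rightmostVisible V y i := by
  rw [leftmostVisible, rightmostVisible, visibleRobots_neg, ← Real.sInf_neg, ← Set.image_neg_eq_neg,
    Set.image_image]
  rfl

lemma rightmostVisible_neg : rightmostVisible V (-y) i = -leftmostVisible V y i := by
  rw [← neg_neg y, leftmostVisible_neg, neg_neg, neg_neg]

lemma moveTarget_neg : moveTarget V (-y) i = -moveTarget V y i := by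
  rw [moveTarget, moveTarget, leftmostVisible_neg, rightmostVisible_neg]
  ring

lemma leftmostVisible_le (h : j ∈ visibleRobots V y i) : leftmostVisible V y i ≤ y j := by
  refine csInf_le ⟨y i - V, ?_⟩ (Set.mem_image_of_mem y h)
  rintro _ ⟨k, hk, rfl⟩
  exact (mem_visibleRobots_iff_le_and_le.1 hk).1

lemma le_rightmostVisible (h : j ∈ visibleRobots V y i) : y j ≤ rightmostVisible V y i := by
  rw [← visibleRobots_neg] at h
  simpa [leftmostVisible_neg] using leftmostVisible_le h

lemma le_leftmostVisible (hV : 0 ≤ V) (h : ∀ j ∈ visibleRobots V y i, a ≤ y j) :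
    a ≤ leftmostVisible V y i :=
  le_csInf (Set.Nonempty.image y ⟨i, self_mem_visibleRobots hV⟩) (Set.forall_mem_image.2 h)

lemma rightmostVisible_le (hV : 0 ≤ V) (h : ∀ j ∈ visibleRobots V y i, y j ≤ a) :
    rightmostVisible V y i ≤ a :=
  csSup_le (Set.Nonempty.image y ⟨i, self_mem_visibleRobots hV⟩) (Set.forall_mem_image.2 h)

lemma leftmostVisible_mono (hV : 0 ≤ V) (hij : y i ≤ y j) :
    leftmostVisible V y i ≤ leftmostVisible V y j := by
  refine le_leftmostVisible hV fun k hk => ?_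
  by_cases hki : y k ≤ y i + V
  · have hjk := (mem_visibleRobots_iff_le_and_le.1 hk).1
    exact leftmostVisible_le (mem_visibleRobots_iff_le_and_le.2 ⟨by linarith, hki⟩)
  · have hi := leftmostVisible_le (y := y) (self_mem_visibleRobots (i := i) hV)
    linarith

lemma rightmostVisible_mono (hV : 0 ≤ V) (hij : y i ≤ y j) :
    rightmostVisible V y i ≤ rightmostVisible V y j := by
  simpa [leftmostVisible_neg] using leftmostVisible_mono (y := -y) hV (neg_le_neg hij)

lemma moveTarget_mono (hV : 0 ≤ V) (hij : y i ≤ y j) : moveTarget V y i ≤ moveTarget V y j := by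
  have hl := leftmostVisible_mono hV hij
  have hr := rightmostVisible_mono hV hij
  unfold moveTarget
  linarith

lemma add_div_two_le_moveTarget (hV : 0 ≤ V) (ha : ∀ j ∈ visibleRobots V y i, a ≤ y j)
    (hk : k ∈ visibleRobots V y i) : (a + y k) / 2 ≤ moveTarget V y i := by
  have hl := le_leftmostVisible hV ha
  have hr := le_rightmostVisible hk
  unfold moveTarget
  linarith

lemma abs_moveTarget_sub_midpoint_le (hV : 0 ≤ V) (h : j ∈ visibleRobots V y i) :
    |moveTarget V y i - (y i + y j) / 2| ≤ V / 2 := by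
  have hl := leftmostVisible_le h
  have hl' : y i - V ≤ leftmostVisible V y i :=
    le_leftmostVisible hV fun _ hk => (mem_visibleRobots_iff_le_and_le.1 hk).1
  have hr := le_rightmostVisible h
  have hr' : rightmostVisible V y i ≤ y i + V :=
    rightmostVisible_le hV fun _ hk => (mem_visibleRobots_iff_le_and_le.1 hk).2
  unfold moveTarget
  exact abs_le.2 ⟨by linarith, by linarith⟩

end Configuration

/-- An execution of the robot model with visibility radius `V` in which exactly the robots in `F`
are faulty, for an arbitrary index type and an arbitrary set of faulty robots. -/
structure IsExecution {ι : Type*} (V : ℝ) (F : Set ι) (x : ℕ → ι → ℝ) : Prop where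
  succ_of_mem : ∀ t, ∀ i ∈ F, x (t + 1) i = x t i
  succ_of_notMem : ∀ t, ∀ i ∉ F, x (t + 1) i = moveTarget V (x t) i

/-- A set of robots that never see a robot outside the set. -/
def IsVisibilityClosed {ι : Type*} (V : ℝ) (x : ℕ → ι → ℝ) (K : Set ι) : Prop :=
  ∀ t, ∀ i ∈ K, visibleRobots V (x t) i ⊆ K

/-- Robots `i` and `j` see each other at some time. -/
def SometimeVisible {ι : Type*} (V : ℝ) (x : ℕ → ι → ℝ) (i j : ι) : Prop :=
  ∃ t, j ∈ visibleRobots V (x t) i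

/-- The robots joined to `i` by a chain of robots that see each other at some time. Allowing all
times, rather than time `0` only, makes this set visibility closed for free. -/
def visibilityGroup {ι : Type*} (V : ℝ) (x : ℕ → ι → ℝ) (i : ι) : Set ι :=
  {j | Relation.ReflTransGen (SometimeVisible V x) i j}

/-- The robots whose positions converge to `c`. -/
def convergingTo {ι : Type*} (x : ℕ → ι → ℝ) (c : ℝ) : Set ι :=
  {j | Tendsto (fun t => x t j) atTop (𝓝 c)}

section Execution

variable {ι : Type*} {V p c : ℝ} {F K : Set ι} {x : ℕ → ι → ℝ} {i j k m : ι} {s t : ℕ}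

lemma isVisibilityClosed_visibilityGroup : IsVisibilityClosed V x (visibilityGroup V x i) :=
  fun t _ hj _ hk => hj.tail ⟨t, hk⟩

namespace IsExecution

lemma neg (h : IsExecution V F x) : IsExecution V F (-x) where
  succ_of_mem t i hi := congrArg Neg.neg (h.succ_of_mem t i hi)
  succ_of_notMem t i hi := by
    rw [Pi.neg_apply x t, moveTarget_neg, ← h.succ_of_notMem t i hi]
    rfl

lemma apply_eq_initial_of_mem (h : IsExecution V F x) (hi : i ∈ F) (t : ℕ) : x t i = x 0 i := by
  induction t with
  | zero => rfl
  | succ t ih => rw [h.succ_of_mem t i hi, ih]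

lemma abs_succ_sub_midpoint_le (h : IsExecution V F x) (hV : 0 ≤ V)
    (hj : j ∈ visibleRobots V (x t) i) : |x (t + 1) i - (x t i + x t j) / 2| ≤ V / 2 := by
  by_cases hi : i ∈ F
  · have hdist := abs_le.1 (mem_visibleRobots.1 hj)
    rw [h.succ_of_mem t i hi]
    exact abs_le.2 ⟨by linarith, by linarith⟩
  · rw [h.succ_of_notMem t i hi]
    exact abs_moveTarget_sub_midpoint_le hV hj

lemma mem_visibleRobots_mono (h : IsExecution V F x) (hV : 0 ≤ V) (hst : s ≤ t)
    (hj : j ∈ visibleRobots V (x s) i) : j ∈ visibleRobots V (x t) i := by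
  induction t, hst using Nat.le_induction with
  | base => exact hj
  | succ t _ ih =>
    have hi_near := abs_le.1 (h.abs_succ_sub_midpoint_le hV ih)
    have hj_near := abs_le.1 (h.abs_succ_sub_midpoint_le hV (mem_visibleRobots_comm.1 ih))
    exact mem_visibleRobots_iff_le_and_le.2 ⟨by linarith, by linarith⟩

lemma forall_le_mono (h : IsExecution V F x) (hV : 0 ≤ V) (hK : IsVisibilityClosed V x K)
    (hst : s ≤ t) (hp : ∀ j ∈ K, p ≤ x s j) : ∀ j ∈ K, p ≤ x t j := by
  induction t, hst using Nat.le_induction with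
  | base => exact hp
  | succ t _ ih =>
    intro j hj
    by_cases hjF : j ∈ F
    · exact (ih j hj).trans_eq (h.succ_of_mem t j hjF).symm
    · have hmove := add_div_two_le_moveTarget hV (fun k hk => ih k (hK t j hj hk))
        (self_mem_visibleRobots hV)
      rw [h.succ_of_notMem t j hjF]
      linarith [ih j hj]

lemma apply_le_apply_of_initial_le (h : IsExecution V F x) (hV : 0 ≤ V) (hi : i ∉ F) (hj : j ∉ F)
    (hij : x 0 i ≤ x 0 j) (t : ℕ) : x t i ≤ x t j := by
  induction t with
  | zero => exact hij
  | succ t ih =>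
    rw [h.succ_of_notMem t i hi, h.succ_of_notMem t j hj]
    exact moveTarget_mono hV ih

lemma exists_leftmost [Finite ι] (h : IsExecution V F x) (hV : 0 ≤ V) (hp : ∀ f ∈ F, p ≤ x 0 f)
    (hlt : ∀ t, ∃ j ∈ K, x t j < p) :
    ∃ m ∈ K, m ∉ F ∧ ∀ t, x t m < p ∧ ∀ j ∈ K, x t m ≤ x t j := by
  have hpF : ∀ t, ∀ f ∈ F, p ≤ x t f := fun t f hf =>
    (hp f hf).trans_eq (h.apply_eq_initial_of_mem hf t).symm
  have hnotF : ∀ {t j}, x t j < p → j ∉ F := fun hj hjF => hj.not_ge (hpF _ _ hjF)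
  obtain ⟨j₀, hj₀K, hj₀⟩ := hlt 0
  obtain ⟨m, ⟨hmK, hmF⟩, hmin⟩ :=
    Set.exists_min_image (K \ F) (x 0) (Set.toFinite _) ⟨j₀, hj₀K, hnotF hj₀⟩
  have hle : ∀ t, ∀ j ∈ K \ F, x t m ≤ x t j := fun t j hj =>
    h.apply_le_apply_of_initial_le hV hmF hj.2 (hmin j hj) t
  have hm_lt : ∀ t, x t m < p := fun t =>
    let ⟨j, hjK, hj⟩ := hlt t
    (hle t j ⟨hjK, hnotF hj⟩).trans_lt hj
  refine ⟨m, hmK, hmF, fun t => ⟨hm_lt t, fun j hj => ?_⟩⟩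
  by_cases hjF : j ∈ F
  · exact (hm_lt t).le.trans (hpF t j hjF)
  · exact hle t j ⟨hj, hjF⟩

lemma monotone_of_leftmost (h : IsExecution V F x) (hV : 0 ≤ V) (hK : IsVisibilityClosed V x K)
    (hmK : m ∈ K) (hm : ∀ t, ∀ j ∈ K, x t m ≤ x t j) : Monotone fun t => x t m :=
  monotone_nat_of_le_succ fun t => h.forall_le_mono hV hK t.le_succ (hm t) m hmK

lemma eq_of_mem_convergingTo (h : IsExecution V F x) (hi : i ∈ F) (hic : i ∈ convergingTo x c) :
    x 0 i = c :=
  tendsto_nhds_unique (tendsto_const_nhds.congr fun t => (h.apply_eq_initial_of_mem hi t).symm) hic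

end IsExecution

lemma eventually_convergingTo_subset_visibleRobots [Finite ι] (hV : 0 < V)
    (hi : i ∈ convergingTo x c) :
    ∀ᶠ t in atTop, convergingTo x c ⊆ visibleRobots V (x t) i := by
  refine eventually_all.2 fun j => eventually_imp_distrib_left.2 fun hj => ?_
  have hdist : Tendsto (fun t => |x t j - x t i|) atTop (𝓝 |c - c|) := (hj.sub hi).abs
  rw [sub_self, abs_zero] at hdist
  exact hdist.eventually_le_const hV

namespace IsExecution

lemma mem_convergingTo_of_mem_visibleRobots (h : IsExecution V F x) (hV : 0 ≤ V)
    (hK : IsVisibilityClosed V x K) (hm : ∀ t, ∀ j ∈ K, x t m ≤ x t j)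
    (hmc : m ∈ convergingTo x c) (hkK : k ∈ K) (hkF : k ∉ F) (hkc : k ∈ convergingTo x c)
    (hj : j ∈ visibleRobots V (x s) k) : j ∈ convergingTo x c := by
  have hupper : Tendsto (fun t => 2 * x (t + 1) k - x t m) atTop (𝓝 (2 * c - c)) :=
    ((hkc.comp (tendsto_add_atTop_nat 1)).const_mul 2).sub hmc
  rw [show 2 * c - c = c by ring] at hupper
  refine tendsto_of_tendsto_of_tendsto_of_le_of_le' hmc hupper
    (Eventually.of_forall fun t => hm t j (hK s k hkK hj)) ?_
  filter_upwards [eventually_ge_atTop s] with t hst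
  have hmove := add_div_two_le_moveTarget hV (fun l hl => hm t l (hK t k hkK hl))
    (h.mem_visibleRobots_mono hV hst hj)
  rw [h.succ_of_notMem t k hkF]
  linarith

lemma eventually_visibleRobots_eq_convergingTo [Finite ι] (h : IsExecution V F x) (hV : 0 < V)
    (hK : IsVisibilityClosed V x K) (hm : ∀ t, ∀ j ∈ K, x t m ≤ x t j)
    (hmc : m ∈ convergingTo x c) (hkK : k ∈ K) (hkF : k ∉ F) (hkc : k ∈ convergingTo x c) :
    ∀ᶠ t in atTop, visibleRobots V (x t) k = convergingTo x c := by
  filter_upwards [eventually_convergingTo_subset_visibleRobots hV hkc] with t ht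
  exact Set.Subset.antisymm
    (fun _ => h.mem_convergingTo_of_mem_visibleRobots hV.le hK hm hmc hkK hkF hkc) ht

lemma eventually_apply_eq_leftmost [Finite ι] (h : IsExecution V F x) (hV : 0 < V)
    (hK : IsVisibilityClosed V x K) (hmK : m ∈ K) (hmF : m ∉ F)
    (hm : ∀ t, ∀ j ∈ K, x t m ≤ x t j) (hmc : m ∈ convergingTo x c)
    (hkK : k ∈ K) (hkF : k ∉ F) (hkc : k ∈ convergingTo x c) :
    ∀ᶠ t in atTop, x t k = x t m := by
  rw [← map_add_atTop_eq_nat 1, eventually_map]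
  filter_upwards [h.eventually_visibleRobots_eq_convergingTo hV hK hm hmc hkK hkF hkc,
    h.eventually_visibleRobots_eq_convergingTo hV hK hm hmc hmK hmF hmc] with t hk_sees hm_sees
  rw [h.succ_of_notMem t k hkF, h.succ_of_notMem t m hmF]
  simp only [moveTarget, leftmostVisible, rightmostVisible, hk_sees, hm_sees]

lemma mem_convergingTo_of_mem_visibilityGroup (h : IsExecution V F x) (hV : 0 ≤ V)
    (hK : IsVisibilityClosed V x K) (hmK : m ∈ K) (hm : ∀ t, ∀ j ∈ K, x t m ≤ x t j)
    (hmc : m ∈ convergingTo x c) (hF : ∀ f ∈ F, f ∉ convergingTo x c)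
    (him : m ∈ visibilityGroup V x i) : i ∈ convergingTo x c := by
  suffices i ∈ K ∧ i ∈ convergingTo x c from this.2
  refine Relation.ReflTransGen.head_induction_on him ⟨hmK, hmc⟩ ?_
  rintro j k ⟨t, hk⟩ - ⟨hkK, hkc⟩
  have hj := mem_visibleRobots_comm.1 hk
  exact ⟨hK t k hkK hj, h.mem_convergingTo_of_mem_visibleRobots hV hK hm hmc hkK
    (fun hkF => hF k hkF hkc) hkc hj⟩

lemma eventually_lt_of_notMem_convergingTo (h : IsExecution V F x) (hV : 0 < V)
    (hp : ∀ f ∈ F, p ≤ x 0 f) (hmi : m ∈ visibilityGroup V x i) (hmF : m ∉ F)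
    (hm : ∀ t, ∀ j ∈ visibilityGroup V x i, x t m ≤ x t j) (hmc : m ∈ convergingTo x c)
    (hic : i ∉ convergingTo x c) : ∀ᶠ t in atTop, p < x t i := by
  have hK : IsVisibilityClosed V x (visibilityGroup V x i) := isVisibilityClosed_visibilityGroup
  obtain ⟨f, hfF, hfc⟩ : ∃ f ∈ F, f ∈ convergingTo x c := by
    by_contra! hF
    exact hic (h.mem_convergingTo_of_mem_visibilityGroup hV.le hK hmi hm hmc hF hmi)
  have hpc : p ≤ c := (hp f hfF).trans_eq (h.eq_of_mem_convergingTo hfF hfc)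
  filter_upwards [hmc.eventually_const_lt (show p - V < c by linarith)] with t ht
  have hunseen : i ∉ visibleRobots V (x t) m := fun hi =>
    hic (h.mem_convergingTo_of_mem_visibleRobots hV.le hK hm hmc hmi hmF hmc hi)
  have hdist : V < x t i - x t m := by
    rwa [mem_visibleRobots, not_le,
      abs_of_nonneg (sub_nonneg.2 (hm t i Relation.ReflTransGen.refl))] at hunseen
  linarith

lemma eventuallyConst_lt [Finite ι] (h : IsExecution V F x) (hV : 0 < V)
    (hp : ∀ f ∈ F, p ≤ x 0 f) (i : ι) : EventuallyConst (fun t => x t i < p) atTop := by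
  rw [eventuallyConst_pred]
  simp only [not_lt]
  have hK : IsVisibilityClosed V x (visibilityGroup V x i) := isVisibilityClosed_visibilityGroup
  by_cases hstay : ∃ T, ∀ j ∈ visibilityGroup V x i, p ≤ x T j
  · obtain ⟨T, hT⟩ := hstay
    right
    filter_upwards [eventually_ge_atTop T] with t ht
    exact h.forall_le_mono hV.le hK ht hT i Relation.ReflTransGen.refl
  push Not at hstay
  obtain ⟨m, hmK, hmF, hm⟩ := h.exists_leftmost hV.le hp hstay
  have hmin : ∀ t, ∀ j ∈ visibilityGroup V x i, x t m ≤ x t j := fun t => (hm t).2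
  obtain ⟨c, hmc⟩ : ∃ c, m ∈ convergingTo x c :=
    ⟨_, tendsto_atTop_ciSup (h.monotone_of_leftmost hV.le hK hmK hmin)
      ⟨p, Set.forall_mem_range.2 fun t => (hm t).1.le⟩⟩
  by_cases hiF : i ∈ F
  · exact .inr (.of_forall fun t => (hp i hiF).trans_eq (h.apply_eq_initial_of_mem hiF t).symm)
  by_cases hic : i ∈ convergingTo x c
  · left
    filter_upwards [h.eventually_apply_eq_leftmost hV hK hmK hmF hmin hmc
      Relation.ReflTransGen.refl hiF hic] with t ht
    exact ht.trans_lt (hm t).1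
  · right
    filter_upwards [h.eventually_lt_of_notMem_convergingTo hV hp hmK hmF hmin hmc hic] with t ht
    exact ht.le

lemma eventuallyConst_gt [Finite ι] (h : IsExecution V F x) (hV : 0 < V)
    (hp : ∀ f ∈ F, x 0 f ≤ p) (i : ι) : EventuallyConst (fun t => x t i > p) atTop := by
  simpa using h.neg.eventuallyConst_lt (p := -p) hV (fun f hf => neg_le_neg (hp f hf)) i

end IsExecution

end Execution

lemma finite_setOf_ne_succ {α : Type*} {f : ℕ → α} (hf : EventuallyConst f atTop) :
    {t | f t ≠ f (t + 1)}.Finite := by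
  obtain ⟨T, hT⟩ := eventuallyConst_atTop_nat.1 hf
  exact (Set.finite_lt_nat T).subset fun t ht => not_le.1 fun hTt => ht (hT t hTt).symm

theorem no_more_crossing_general {ι : Type*} [Finite ι] {V p q : ℝ} (hV : 0 < V) {F : Set ι}
    {x : ℕ → ι → ℝ} (h : IsExecution V F x) (hp : ∀ f ∈ F, p ≤ x 0 f) (hq : ∀ f ∈ F, x 0 f ≤ q)
    (i : ι) :
    {t : ℕ | (x t i < p) ≠ (x (t + 1) i < p)}.Finite ∧
      {t : ℕ | (x t i > q) ≠ (x (t + 1) i > q)}.Finite :=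
  ⟨finite_setOf_ne_succ (h.eventuallyConst_lt hV hp i),
    finite_setOf_ne_succ (h.eventuallyConst_gt hV hq i)⟩

/-- (No More Crossing) Every non-faulty robot crosses each of the two faulty
robots only finitely many times. -/
theorem no_more_crossing
    (n : ℕ) (hn : 2 ≤ n) (V D : ℝ) (hV : 0 < V) (hD : 0 < D)
    (x : ℕ → Fin (n + 1) → ℝ)
    (hfault0 : ∀ t : ℕ, x t 0 = 0)
    (hfaultn : ∀ t : ℕ, x t (Fin.last n) = D)
    (hupd : ∀ t : ℕ, ∀ i : Fin (n + 1), i ≠ 0 → i ≠ Fin.last n →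
      x (t + 1) i = (lpos V x t i + rpos V x t i) / 2)
    (hconn : ∀ i j : Fin (n + 1),
      Relation.ReflTransGen (fun a b : Fin (n + 1) => |x 0 a - x 0 b| ≤ V) i j)
    (i : Fin (n + 1)) (hi0 : i ≠ 0) (hin : i ≠ Fin.last n) :
    {t : ℕ | (x t i < 0) ≠ (x (t + 1) i < 0)}.Finite ∧
      {t : ℕ | (x t i > D) ≠ (x (t + 1) i > D)}.Finite := by
  have h : IsExecution V {0, Fin.last n} x :=
    ⟨by simp [hfault0, hfaultn], fun t i hi => hupd t i (mt .inl hi) (mt .inr hi)⟩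
  exact no_more_crossing_general hV h (by simp [*, hD.le]) (by simp [*, hD.le]) i
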